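/- Let h, d, m ∈ ℕ with m ≥ 2 and let G := G_{h,d,m}. For every L ∈ ℕ and every vertex x on the L-th level of the binary tree B(G), the vertex set S(Δ(x)) ∪ B_G(R(G), L) separates S(G) from T(G) in G. -/

import Mathlib

open SimpleGraph

namespace CGT

/-- Distance between two vertex sets, as an extended natural number. -/
noncomputable def sDist {V : Type*} (G : SimpleGraph V) (U U' : Set V) : ℕ∞ :=
  ⨅ (u : U) (v : U'), G.edist u.1 v.1

/-- The ball of radius `r` around a vertex set `U`. -/
def gBall {V : Type*} (G : SimpleGraph V) (U : Set V) (r : ℕ) : Set V :=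
  {v | ∃ u ∈ U, G.edist u v ≤ (r : ℕ∞)}

/-- A set of vertices is connected if the induced subgraph is connected. -/
def SetConn {V : Type*} (G : SimpleGraph V) (U : Set V) : Prop :=
  (G.induce U).Connected

/-- The vertex set of a walk. -/
def walkSupp {V : Type*} {G : SimpleGraph V} {a b : V} (p : G.Walk a b) : Set V :=
  {v | v ∈ p.support}

/-- `X` separates `Y` and `Z` in `G`: every path with one end in `Y` and one in `Z`
contains a vertex of `X`. -/
def Separates {V : Type*} (G : SimpleGraph V) (X Y Z : Set V) : Prop :=
  ∀ ⦃y z : V⦄, y ∈ Y → z ∈ Z → ∀ p : G.Walk y z, p.IsPath → ∃ x ∈ X, x ∈ p.support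

/-- `f` is an `(M,A)`-quasi-isometry from `G` to `H`.  The two-sided distance bound
`M⁻¹ d_G(u,v) - A ≤ d_H(f u, f v) ≤ M d_G(u,v) + A` is stated multiplied out over `ℕ∞`. -/
structure IsQI {V V' : Type*} (M A : ℕ) (G : SimpleGraph V) (H : SimpleGraph V')
    (f : V → V') : Prop where
  upper : ∀ u v : V, H.edist (f u) (f v) ≤ (M : ℕ∞) * G.edist u v + (A : ℕ∞)
  lower : ∀ u v : V, G.edist u v ≤ (M : ℕ∞) * H.edist (f u) (f v) + (M : ℕ∞) * (A : ℕ∞)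
  dense : ∀ w : V', ∃ v : V, H.edist w (f v) ≤ (A : ℕ∞)

/-- `G` is `(M,A)`-quasi-isometric to `H`. -/
def QIsometric {V V' : Type*} (M A : ℕ) (G : SimpleGraph V) (H : SimpleGraph V') : Prop :=
  ∃ f : V → V', IsQI M A G H f

/-- `X` is a minor of `G`. -/
def HasMinor {V W : Type*} (G : SimpleGraph V) (X : SimpleGraph W) : Prop :=
  ∃ U : W → Set V,
    (∀ x, (U x).Nonempty) ∧ (∀ x, SetConn G (U x)) ∧
    (∀ ⦃x y⦄, x ≠ y → Disjoint (U x) (U y)) ∧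
    ∀ ⦃x y⦄, X.Adj x y → ∃ u ∈ U x, ∃ v ∈ U y, G.Adj u v

/-- The `(a × b)`-grid graph. -/
def gridGraph (a b : ℕ) : SimpleGraph (Fin a × Fin b) :=
  SimpleGraph.fromRel (fun u v =>
    (u.1 = v.1 ∧ u.2.1 + 1 = v.2.1) ∨ (u.2 = v.2 ∧ u.1.1 + 1 = v.1.1))

/-- A `K`-fat model of `X` in `G`: disjoint connected branch sets joined by internally
disjoint branch paths, all pairwise at distance at least `K` except for a branch path and
the branch sets of its endpoints. -/
structure FatModel {V W : Type*} (G : SimpleGraph V) (X : SimpleGraph W) (K : ℕ) where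
  branch : W → Set V
  branch_nonempty : ∀ x, (branch x).Nonempty
  branch_connected : ∀ x, SetConn G (branch x)
  branch_disjoint : ∀ ⦃x y⦄, x ≠ y → Disjoint (branch x) (branch y)
  pathEnd : ∀ ⦃x y⦄, X.Adj x y → V
  path : ∀ ⦃x y⦄ (e : X.Adj x y), G.Walk (pathEnd e) (pathEnd e.symm)
  path_isPath : ∀ ⦃x y⦄ (e : X.Adj x y), (path e).IsPath
  path_symm : ∀ ⦃x y⦄ (e : X.Adj x y), path e.symm = (path e).reverse
  pathEnd_mem : ∀ ⦃x y⦄ (e : X.Adj x y), pathEnd e ∈ branch x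
  path_meets : ∀ ⦃x y⦄ (e : X.Adj x y) (z : W) (v : V), v ∈ (path e).support → v ∈ branch z →
    (z = x ∧ v = pathEnd e) ∨ (z = y ∧ v = pathEnd e.symm)
  path_int_disjoint : ∀ ⦃x y x' y'⦄ (e : X.Adj x y) (e' : X.Adj x' y'), s(x, y) ≠ s(x', y') →
    ∀ v, v ∈ (path e).support → v ∈ (path e').support → v = pathEnd e' ∨ v = pathEnd e'.symm
  fat_branch : ∀ ⦃x y⦄, x ≠ y → (K : ℕ∞) ≤ sDist G (branch x) (branch y)
  fat_path_branch : ∀ ⦃x y⦄ (e : X.Adj x y) (z : W), z ≠ x → z ≠ y →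
    (K : ℕ∞) ≤ sDist G (walkSupp (path e)) (branch z)
  fat_paths : ∀ ⦃x y x' y'⦄ (e : X.Adj x y) (e' : X.Adj x' y'), s(x, y) ≠ s(x', y') →
    (K : ℕ∞) ≤ sDist G (walkSupp (path e)) (walkSupp (path e'))

/-- `X` is a `K`-fat minor of `G`. -/
def IsFatMinor {V W : Type*} (G : SimpleGraph V) (X : SimpleGraph W) (K : ℕ) : Prop :=
  Nonempty (FatModel G X K)

/-- `W` is a `K`-fat `n`-path-connected set in `G`. -/
def FatPathConn {V : Type*} (G : SimpleGraph V) (K n : ℕ) (W : Set V) : Prop :=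
  (∃ S : Finset V, ↑S ⊆ W ∧ 2 * n ≤ S.card) ∧
  (∀ ⦃u v : V⦄, u ∈ W → v ∈ W → u ≠ v → (K : ℕ∞) ≤ G.edist u v) ∧
  ∀ l : ℕ, l ≤ n → ∀ A B : Finset V, ↑A ⊆ W → ↑B ⊆ W → A.card = l → B.card = l →
    ∃ (a b : Fin l → V) (P : ∀ i : Fin l, G.Walk (a i) (b i)),
      (∀ i, (P i).IsPath) ∧ (∀ i, a i ∈ A ∧ b i ∈ B) ∧
      ∀ i j, i ≠ j → (K : ℕ∞) ≤ sDist G (walkSupp (P i)) (walkSupp (P j))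

end CGT

namespace Ghdm

/-- Raw vertex codes for the graphs `G_{h,d,m}`:
`path k` is the `k`-th vertex of the base path; `tree j i p` is the vertex at position `p`
of the `i`-th binary tree at level `j` (the root being position `[]`); and
`spine j i k t e s` is the `s`-th internal vertex of the spine from the `k`-th leaf of that
tree to the `e`-th element of the `t`-th local gluing set at level `j-1`. -/
inductive Raw : Type where
  | path (k : ℕ)
  | tree (j i : ℕ) (p : List Bool)
  | spine (j i k t e s : ℕ)
deriving DecidableEq

/-- `N = 2^{h+1} - 1`, the number of copies of `G_{h,d,m-1}` glued inside `G_{h,d,m}`. -/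
def NN (h : ℕ) : ℕ := 2 ^ (h + 1) - 1

/-- Canonical representative of a raw vertex code: all tree roots are identified with the
single root `tree m 1 []`, and the leftmost leaf of tree `i > 1` is identified with the
rightmost leaf of tree `i - 1` (consecutive copies are glued along these leaves). -/
def canon (h m : ℕ) : Raw → Raw
  | .tree j i p =>
    if p = [] then .tree m 1 []
    else if p = List.replicate h false ∧ 1 < i then .tree j (i - 1) (List.replicate h true)
    else .tree j i p
  | x => x

/-- The `q`-bit binary representation of `i` (most significant bit first);
`false` means "left". -/
def natToBits (q i : ℕ) : List Bool := (List.range q).map fun a => Nat.testBit i (q - 1 - a)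

/-- Position of the `k`-th leaf (1-based, from the left) in a binary tree of height `h`. -/
def leafPos (h k : ℕ) : List Bool := natToBits h (k - 1)

/-- The `e`-th element of the `g`-th gluing set `V^{jv}_g` (at level `jv`):
its element `e = 1` is an anchor of the base path, and its element `e ≥ 2` is a shared
extreme leaf of the trees at level `e`. -/
def VsetElem (h d jv g e : ℕ) : Raw :=
  if e = 1 then .path ((g - 1) * NN h ^ (jv - 1) * (d + 1))
  else if (g - 1) * NN h ^ (jv - e) = 0 then .tree e 1 (List.replicate h false)
  else .tree e ((g - 1) * NN h ^ (jv - e)) (List.replicate h true)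

/-- Valid (canonical) vertex codes of `G_{h,d,m}`. -/
def Valid (h d m : ℕ) : Raw → Prop
  | .path k => k ≤ (d + 1) * NN h ^ (m - 1)
  | .tree j i p => 2 ≤ j ∧ j ≤ m ∧ 1 ≤ i ∧ i ≤ NN h ^ (m - j) ∧ p.length ≤ h ∧
      (p = [] → j = m ∧ i = 1) ∧ (p = List.replicate h false → p ≠ [] → i = 1)
  | .spine j i k t e s => 2 ≤ j ∧ j ≤ m ∧ 1 ≤ i ∧ i ≤ NN h ^ (m - j) ∧
      1 ≤ k ∧ k ≤ 2 ^ h ∧ (t = 2 * k - 2 ∨ t = 2 * k + 1) ∧ 1 ≤ t ∧ t ≤ 2 ^ (h + 1) ∧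
      1 ≤ e ∧ e ≤ j - 1 ∧ 1 ≤ s ∧ s ≤ d

/-- Generating adjacencies between raw vertex codes: consecutive base path vertices,
parent/child in the binary trees, consecutive spine vertices, a spine and the leaf it
starts at, a spine and the gluing-set vertex it ends at (the latter collapsed to a single
edge when `d = 0`). -/
inductive rawAdj (h d : ℕ) : Raw → Raw → Prop
  | base (k : ℕ) : rawAdj h d (.path k) (.path (k + 1))
  | child (j i : ℕ) (p : List Bool) (b : Bool) : p.length < h →
      rawAdj h d (.tree j i p) (.tree j i (p ++ [b]))
  | step (j i k t e s : ℕ) : rawAdj h d (.spine j i k t e s) (.spine j i k t e (s + 1))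
  | toLeaf (j i k t e : ℕ) : rawAdj h d (.tree j i (leafPos h k)) (.spine j i k t e 1)
  | toV (j i k t e : ℕ) :
      rawAdj h d (.spine j i k t e d) (VsetElem h d (j - 1) ((i - 1) * NN h + t) e)
  | short (j i k t e : ℕ) : d = 0 → 1 ≤ k → k ≤ 2 ^ h → (t = 2 * k - 2 ∨ t = 2 * k + 1) →
      1 ≤ t → t ≤ 2 ^ (h + 1) → 1 ≤ e → e ≤ j - 1 →
      rawAdj h d (.tree j i (leafPos h k)) (VsetElem h d (j - 1) ((i - 1) * NN h + t) e)

/-- Adjacency of canonical representatives. -/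
def rel (h d m : ℕ) (x y : Raw) : Prop :=
  ∃ a b, rawAdj h d a b ∧ x = canon h m a ∧ y = canon h m b

/-- The vertex set of `G_{h,d,m}`. -/
def Verts (h d m : ℕ) : Set Raw := {x | Valid h d m x}

/-- The graph `G_{h,d,m}`. -/
def G (h d m : ℕ) : SimpleGraph (Verts h d m) :=
  (SimpleGraph.fromRel (rel h d m)).induce (Verts h d m)

/-- Lift a set of raw codes to a set of vertices of `G_{h,d,m}`. -/
def lift {h d m : ℕ} (S : Set Raw) : Set (Verts h d m) := Subtype.val ⁻¹' S

/-- The root `R(G_{h,d,m})`. -/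
def RootR (m : ℕ) : Raw := .tree m 1 []

/-- The gluing set `V^{jv}_g` of `G_{h,d,m}`, as a set of raw codes. -/
def VsetRaw (h d m jv g : ℕ) : Set Raw :=
  {x | ∃ e, 1 ≤ e ∧ e ≤ jv ∧ x = canon h m (VsetElem h d jv g e)}

/-- The set `S(G_{h,d,m})`. -/
def SsetR (h d m : ℕ) : Set Raw :=
  VsetRaw h d m (m - 1) 1 ∪ {canon h m (.tree m 1 (leafPos h 1))}

/-- The set `T(G_{h,d,m})`. -/
def TsetR (h d m : ℕ) : Set Raw :=
  VsetRaw h d m (m - 1) (2 ^ (h + 1)) ∪ {canon h m (.tree m 1 (leafPos h (2 ^ h)))}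

/-- For a vertex of the top binary tree at position `p`, the (1-based) index of the
leftmost leaf of the top tree below it. -/
def kOf (h : ℕ) (p : List Bool) : ℕ :=
  (p.foldl (fun a b => 2 * a + if b then 1 else 0) 0) * 2 ^ (h - p.length) + 1

/-- `S(Δ(x))` for the vertex `x` of the top binary tree `B(G_{h,d,m})` at position `p`. -/
def SDeltaR (h d m : ℕ) (p : List Bool) : Set Raw :=
  VsetRaw h d m (m - 1) (2 * kOf h p - 1) ∪ {canon h m (.tree m 1 (leafPos h (kOf h p)))}

/-- The leaf of `B(G_{h,d,m})` immediately to the left of the leftmost leaf below the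
top-tree vertex at position `p`; it is the unique leaf joined by spines to `S(Δ(x))`. -/
def leafLeftR (h m : ℕ) (p : List Bool) : Raw :=
  canon h m (.tree m 1 (leafPos h (kOf h p - 1)))

end Ghdm

/-!
Let `c` be the number of leaves of the top binary tree to the left of the leaves below `x`. If
`c = 0`, then `S(Δ(x)) = S(G)`. Otherwise the gluing set in `S(Δ(x))` is a vertical line with
exactly `2 * c` of the copies of `G_{h,d,m-1}` on its left, and it splits everything below the top
tree into a left and a right part. The only spines crossing this line start at the first leaf below
`x`, which belongs to `S(Δ(x))`. Edges of the top tree cross it only above level `L`, since the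
leaves below a vertex of level at least `L` all lie on the same side. So outside
`S(Δ(x)) ∪ B_G(R(G), L)` the side is constant along walks, while `S(G)` lies on the left and `T(G)`
on the right.
-/

namespace CGT

variable {V : Type*} {Γ : SimpleGraph V} {X Y Z : Set V}

lemma iff_of_walk_avoiding {P : V → Prop}
    (hP : ∀ ⦃u v⦄, Γ.Adj u v → u ∉ X → v ∉ X → (P u ↔ P v)) {u v : V} (w : Γ.Walk u v)
    (hw : ∀ x ∈ w.support, x ∉ X) : P u ↔ P v := by
  induction w with
  | nil => rfl
  | cons hadj w ih =>
    rw [Walk.support_cons, List.forall_mem_cons] at hw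
    exact (hP hadj hw.1 (hw.2 _ w.start_mem_support)).trans (ih hw.2)

lemma separates_of_invariant (P : V → Prop)
    (hP : ∀ ⦃u v⦄, Γ.Adj u v → u ∉ X → v ∉ X → (P u ↔ P v))
    (hY : ∀ y ∈ Y, y ∉ X → P y) (hZ : ∀ z ∈ Z, z ∉ X → ¬ P z) : Separates Γ X Y Z := by
  intro y z hy hz w _
  by_contra! hw
  have hwX : ∀ x ∈ w.support, x ∉ X := fun x hx hxX => hw x hxX hx
  exact hZ z hz (hwX z w.end_mem_support)
    ((iff_of_walk_avoiding hP w hwX).1 (hY y hy (hwX y w.start_mem_support)))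

lemma separates_of_subset (hYX : Y ⊆ X) : Separates Γ X Y Z :=
  fun y _ hy _ w _ => ⟨y, hYX hy, w.start_mem_support⟩

end CGT

namespace Ghdm

/-! ### Leaves of the top tree -/

/-- The number with binary digits `p`, most significant bit first. -/
def bitsValue (p : List Bool) : ℕ := p.foldl (fun a b => 2 * a + if b then 1 else 0) 0

lemma bitsValue_concat (p : List Bool) (b : Bool) :
    bitsValue (p ++ [b]) = 2 * bitsValue p + if b then 1 else 0 := by
  simp [bitsValue]

lemma bitsValue_lt_two_pow (p : List Bool) : bitsValue p < 2 ^ p.length := by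
  induction p using List.reverseRecOn with
  | nil => simp [bitsValue]
  | append_singleton q b ih =>
    rw [bitsValue_concat, List.length_append, List.length_singleton, pow_succ]
    split <;> omega

lemma length_natToBits (q i : ℕ) : (natToBits q i).length = q := by simp [natToBits]

lemma natToBits_succ (q i : ℕ) :
    natToBits (q + 1) i = natToBits q (i / 2) ++ [i.testBit 0] := by
  unfold natToBits
  rw [List.range_succ, List.map_append]
  congr 1
  · refine List.map_congr_left fun a ha => ?_
    rw [List.mem_range] at ha
    rw [Nat.testBit_div_two]
    congr 1
    omega
  · simp

lemma bitsValue_natToBits {q i : ℕ} (hi : i < 2 ^ q) : bitsValue (natToBits q i) = i := by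
  induction q generalizing i with
  | zero => simpa [natToBits, bitsValue, eq_comm] using hi
  | succ q ih =>
    rw [natToBits_succ, bitsValue_concat, ih (by rw [pow_succ] at hi; omega), Nat.testBit_zero]
    simp only [decide_eq_true_eq]
    split <;> omega

/-- The number of leaves of a binary tree of height `h` that lie to the left of every leaf below
position `p`. -/
def leavesLeft (h : ℕ) (p : List Bool) : ℕ := bitsValue p * 2 ^ (h - p.length)

lemma kOf_eq_leavesLeft_add_one (h : ℕ) (p : List Bool) : kOf h p = leavesLeft h p + 1 := rfl

lemma leavesLeft_lt_two_pow {h : ℕ} {p : List Bool} (hp : p.length ≤ h) :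
    leavesLeft h p < 2 ^ h := by
  calc leavesLeft h p < 2 ^ p.length * 2 ^ (h - p.length) :=
        Nat.mul_lt_mul_of_pos_right (bitsValue_lt_two_pow p) (by positivity)
    _ = 2 ^ h := by rw [← pow_add, Nat.add_sub_cancel' hp]

lemma height_pos_of_leavesLeft_pos {h : ℕ} {p : List Bool} (hp : p.length ≤ h)
    (hc : 0 < leavesLeft h p) : 0 < h := by
  rcases h.eq_zero_or_pos with rfl | hh
  · have := leavesLeft_lt_two_pow hp
    omega
  · exact hh

lemma length_leafPos (h k : ℕ) : (leafPos h k).length = h := length_natToBits _ _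

lemma leafPos_ne_nil {h : ℕ} (hh : 0 < h) (k : ℕ) : leafPos h k ≠ [] :=
  List.ne_nil_of_length_pos (by rwa [length_leafPos])

lemma leavesLeft_leafPos {h k : ℕ} (hk : k ≤ 2 ^ h) : leavesLeft h (leafPos h k) = k - 1 := by
  have hk' : k - 1 < 2 ^ h := by have := Nat.two_pow_pos h; omega
  rw [leavesLeft, length_leafPos, Nat.sub_self, pow_zero, mul_one, leafPos,
    bitsValue_natToBits hk']

lemma leavesLeft_concat {h : ℕ} {q : List Bool} (hq : q.length < h) (b : Bool) :
    leavesLeft h (q ++ [b]) = leavesLeft h q + if b then 2 ^ (h - q.length - 1) else 0 := by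
  obtain ⟨r, hr⟩ : ∃ r, h - q.length = r + 1 := ⟨h - q.length - 1, by omega⟩
  have hr' : h - (q.length + 1) = r := by omega
  rw [leavesLeft, leavesLeft, bitsValue_concat, List.length_append, List.length_singleton, hr, hr',
    Nat.add_sub_cancel, pow_succ]
  split <;> ring

lemma two_pow_dvd_leavesLeft (h : ℕ) {p : List Bool} {l : ℕ} (hl : p.length ≤ l) :
    2 ^ (h - l) ∣ leavesLeft h p :=
  (pow_dvd_pow 2 (Nat.sub_le_sub_left hl h)).mul_left _

lemma leavesLeft_concat_lt_iff {h c : ℕ} {q : List Bool} (hq : q.length < h)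
    (hc : 2 ^ (h - q.length) ∣ c) (b : Bool) :
    leavesLeft h (q ++ [b]) < c ↔ leavesLeft h q < c := by
  rw [leavesLeft_concat hq]
  have hhalf : 2 ^ (h - q.length - 1) < 2 ^ (h - q.length) :=
    Nat.pow_lt_pow_right one_lt_two (by omega)
  refine ⟨fun hlt => by omega, fun hlt => ?_⟩
  have hblock : leavesLeft h q + 2 ^ (h - q.length) ≤ c := by
    obtain ⟨z, rfl⟩ := hc
    rw [leavesLeft, mul_comm _ z] at *
    rw [← Nat.succ_mul]
    exact Nat.mul_le_mul_right _ (Nat.lt_of_mul_lt_mul_right hlt)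
  split <;> omega

/-! ### Canonical codes -/

variable {h d m : ℕ}

lemma NN_pos (h : ℕ) : 0 < NN h :=
  Nat.sub_pos_of_lt (Nat.one_lt_two_pow h.succ_ne_zero)

lemma NN_add_one (h : ℕ) : NN h + 1 = 2 ^ (h + 1) :=
  Nat.sub_add_cancel Nat.one_le_two_pow

lemma replicate_ne_nil (hh : 0 < h) (b : Bool) : List.replicate h b ≠ [] :=
  List.ne_nil_of_length_pos (by rwa [List.length_replicate])

lemma replicate_true_ne_replicate_false (hh : 0 < h) :
    List.replicate h true ≠ List.replicate h false := by
  simp [List.replicate_inj, hh.ne']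

lemma canon_tree_top (q : List Bool) : canon h m (.tree m 1 q) = .tree m 1 q := by
  simp +contextual [canon]

lemma canon_tree {q : List Bool} (hq : q ≠ []) (j i : ℕ) :
    canon h m (.tree j i q) = if q = List.replicate h false ∧ 1 < i then
      .tree j (i - 1) (List.replicate h true) else .tree j i q := by
  rw [canon, if_neg hq]

lemma canon_tree_of_length_lt {q : List Bool} (hq : q ≠ []) (hqh : q.length < h) (j i : ℕ) :
    canon h m (.tree j i q) = .tree j i q := by
  rw [canon_tree hq, if_neg]
  rintro ⟨rfl, -⟩
  simp at hqh

lemma bounds_of_valid_canon_tree {j i : ℕ} {q : List Bool} (hq : q ≠ [])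
    (hv : Valid h d m (canon h m (.tree j i q))) : 2 ≤ j ∧ j ≤ m ∧ 1 ≤ i := by
  rw [canon_tree hq] at hv
  split_ifs at hv <;> simp only [Valid] at hv <;> omega

lemma valid_top_iff {q : List Bool} : Valid h d m (.tree m 1 q) ↔ 2 ≤ m ∧ q.length ≤ h := by
  simp [Valid]

lemma canon_vsetElem_one (jv g : ℕ) :
    canon h m (VsetElem h d jv g 1) = .path ((g - 1) * NN h ^ (jv - 1) * (d + 1)) := rfl

lemma canon_vsetElem_of_two_le (hh : 0 < h) {jv g e : ℕ} (hg : 2 ≤ g) (he : 2 ≤ e) :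
    canon h m (VsetElem h d jv g e) =
      .tree e ((g - 1) * NN h ^ (jv - e)) (List.replicate h true) := by
  have hpos : (g - 1) * NN h ^ (jv - e) ≠ 0 :=
    (Nat.mul_pos (by omega) (pow_pos (NN_pos h) _)).ne'
  rw [VsetElem, if_neg (by omega), if_neg hpos, canon_tree (replicate_ne_nil hh true),
    if_neg fun hfalse => replicate_true_ne_replicate_false hh hfalse.1]

lemma canon_vsetElem_first (hh : 0 < h) {jv e : ℕ} (he : 2 ≤ e) :
    canon h m (VsetElem h d jv 1 e) = .tree e 1 (List.replicate h false) := by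
  rw [VsetElem, if_neg (by omega), if_pos (by simp), canon_tree (replicate_ne_nil hh false),
    if_neg (by simp)]

lemma le_of_valid_canon_vsetElem (hh : 0 < h) {jv g e : ℕ} (hg : 2 ≤ g) (he : 1 ≤ e)
    (hejv : e ≤ jv) (hjv : jv ≤ m) (hv : Valid h d m (canon h m (VsetElem h d jv g e))) :
    g - 1 ≤ NN h ^ (m - jv) := by
  have hindex : (g - 1) * NN h ^ (jv - e) ≤ NN h ^ (m - e) := by
    rcases he.eq_or_lt with rfl | he'
    · rw [canon_vsetElem_one, Valid, mul_comm (d + 1)] at hv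
      exact Nat.le_of_mul_le_mul_right hv d.succ_pos
    · rw [canon_vsetElem_of_two_le hh hg he'] at hv
      exact hv.2.2.2.1
  rw [← Nat.sub_add_sub_cancel hjv hejv, pow_add] at hindex
  exact Nat.le_of_mul_le_mul_right hindex (pow_pos (NN_pos h) _)

/-! ### The ball around the root -/

/-- The vertices of the top tree of `G_{h,d,m}` on the levels `0, …, L`. -/
def topLevels (m L : ℕ) : Set Raw := {x | ∃ q : List Bool, q.length ≤ L ∧ x = .tree m 1 q}

lemma adj_top_child {q : List Bool} {b : Bool} (hv : Valid h d m (.tree m 1 q))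
    (hv' : Valid h d m (.tree m 1 (q ++ [b]))) :
    (G h d m).Adj ⟨.tree m 1 q, hv⟩ ⟨.tree m 1 (q ++ [b]), hv'⟩ := by
  have hq : q.length < h := by simpa using (valid_top_iff.1 hv').2
  simp only [G, comap_adj, fromRel_adj, Function.Embedding.subtype_apply]
  exact ⟨by simp, .inl ⟨_, _, .child m 1 q b hq, (canon_tree_top _).symm, (canon_tree_top _).symm⟩⟩

lemma edist_root_top_le {q : List Bool} (hroot : Valid h d m (RootR m))
    (hv : Valid h d m (.tree m 1 q)) :
    (G h d m).edist ⟨RootR m, hroot⟩ ⟨.tree m 1 q, hv⟩ ≤ (q.length : ℕ∞) := by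
  induction q using List.reverseRecOn with
  | nil => exact SimpleGraph.edist_self.le
  | append_singleton q b ih =>
    have hvq : Valid h d m (.tree m 1 q) := by
      rw [valid_top_iff, List.length_append] at *
      omega
    calc (G h d m).edist ⟨RootR m, hroot⟩ ⟨.tree m 1 (q ++ [b]), hv⟩
      _ ≤ (G h d m).edist ⟨RootR m, hroot⟩ ⟨.tree m 1 q, hvq⟩ +
          (G h d m).edist ⟨.tree m 1 q, hvq⟩ ⟨.tree m 1 (q ++ [b]), hv⟩ :=
        SimpleGraph.edist_triangle
      _ ≤ q.length + 1 :=
        add_le_add (ih hvq) (edist_eq_one_iff_adj.2 (adj_top_child hvq hv)).le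
      _ = (q ++ [b]).length := by simp

lemma lift_topLevels_subset_gBall (h d m L : ℕ) :
    lift (topLevels m L) ⊆ CGT.gBall (G h d m) (lift {RootR m}) L := by
  rintro ⟨_, hv⟩ ⟨q, hq, rfl⟩
  have hm : 2 ≤ m := (valid_top_iff.1 (show Valid h d m (.tree m 1 q) from hv)).1
  have hroot : Valid h d m (RootR m) := valid_top_iff.2 ⟨hm, h.zero_le⟩
  exact ⟨⟨RootR m, hroot⟩, rfl, (edist_root_top_le hroot hv).trans (by exact_mod_cast hq)⟩

/-! ### The two sides of the cut -/

/-- The number of copies of `G_{h,d,e}` (of segments of the base path, for `e = 1`) that lie to the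
left of the gluing set `V^{m-1}_{2c+1}`, for `e ≤ m - 1`. -/
def copiesLeft (h m c e : ℕ) : ℕ := 2 * c * NN h ^ (m - 1 - e)

lemma copiesLeft_pos {c : ℕ} (hc : 0 < c) (e : ℕ) : 0 < copiesLeft h m c e :=
  Nat.mul_pos (by omega) (pow_pos (NN_pos h) _)

lemma copiesLeft_pred (c : ℕ) : copiesLeft h m c (m - 1) = 2 * c := by simp [copiesLeft]

lemma copiesLeft_mul_pow {j e : ℕ} (hej : e ≤ j) (hj : j < m) (c : ℕ) :
    copiesLeft h m c j * NN h ^ (j - e) = copiesLeft h m c e := by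
  rw [copiesLeft, copiesLeft, mul_assoc, ← pow_add, Nat.sub_add_sub_cancel (by omega) hej]

/-- The part of `G_{h,d,m}` to the left of the gluing set `V^{m-1}_{2c+1}` and of the leaf `c + 1`
of the top tree. A vertex of the top tree is on the left if the first leaf below it is, and a spine
is on the left if the gluing set it leads to lies to the left of that line or on it. -/
def IsLeft (h d m c : ℕ) : Raw → Prop
  | .path k => k < copiesLeft h m c 1 * (d + 1)
  | .tree j i q => if j = m then leavesLeft h q < c else i ≤ copiesLeft h m c j
  | .spine j i _ t _ _ => (i - 1) * NN h + t ≤ copiesLeft h m c (j - 1) + 1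

lemma isLeft_tree_top {c i : ℕ} {q : List Bool} :
    IsLeft h d m c (.tree m i q) ↔ leavesLeft h q < c := by
  rw [IsLeft, if_pos rfl]

lemma isLeft_tree_of_lt {c j i : ℕ} {q : List Bool} (hj : j < m) :
    IsLeft h d m c (.tree j i q) ↔ i ≤ copiesLeft h m c j := by
  rw [IsLeft, if_neg hj.ne]

/-- The `k`-th leaf of a binary tree of height `h` is joined by spines to the `t`-th of the gluing
sets below that tree. -/
structure IsJoined (h k t : ℕ) : Prop where
  leaf_le : k ≤ 2 ^ h
  eq_or_eq : t = 2 * k - 2 ∨ t = 2 * k + 1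
  one_le_leaf : 1 ≤ k
  one_le : 1 ≤ t
  le_two_pow : t ≤ 2 ^ (h + 1)

lemma IsJoined.two_le {k t : ℕ} (hkt : IsJoined h k t) : 2 ≤ t := by
  obtain ⟨_, heq, hk, ht, _⟩ := hkt
  omega

variable {p : List Bool}

lemma path_mem_SDeltaR (hm : 2 ≤ m) :
    .path (copiesLeft h m (leavesLeft h p) 1 * (d + 1)) ∈ SDeltaR h d m p :=
  .inl ⟨1, le_rfl, by omega, rfl⟩

lemma tree_mem_SDeltaR (hh : 0 < h) (hc : 0 < leavesLeft h p) {e : ℕ} (he : 2 ≤ e) (hem : e < m) :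
    .tree e (copiesLeft h m (leavesLeft h p) e) (List.replicate h true) ∈ SDeltaR h d m p := by
  refine .inl ⟨e, by omega, by omega, ?_⟩
  rw [kOf_eq_leavesLeft_add_one, canon_vsetElem_of_two_le hh (by omega) he]
  rfl

lemma leaf_mem_SDeltaR : .tree m 1 (leafPos h (leavesLeft h p + 1)) ∈ SDeltaR h d m p :=
  .inr (canon_tree_top _).symm

lemma isLeft_canon_tree_iff (hh : 0 < h) (hc : 0 < leavesLeft h p) {j i : ℕ} {q : List Bool}
    (hq : q ≠ []) (hj : 2 ≤ j) (hjm : j < m) (hS : canon h m (.tree j i q) ∉ SDeltaR h d m p) :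
    IsLeft h d m (leavesLeft h p) (canon h m (.tree j i q)) ↔
      i ≤ copiesLeft h m (leavesLeft h p) j := by
  rw [canon_tree hq] at hS ⊢
  split_ifs at hS ⊢ with hshift
  · have hne : i - 1 ≠ copiesLeft h m (leavesLeft h p) j := fun heq =>
      hS (heq ▸ tree_mem_SDeltaR hh hc hj hjm)
    rw [isLeft_tree_of_lt hjm]
    omega
  · exact isLeft_tree_of_lt hjm

lemma isLeft_canon_vsetElem_iff (hh : 0 < h) {jv g e : ℕ} (hg : 2 ≤ g) (he : 1 ≤ e)
    (hejv : e ≤ jv) (hjv : jv < m)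
    (hS : canon h m (VsetElem h d jv g e) ∉ SDeltaR h d m p) :
    IsLeft h d m (leavesLeft h p) (canon h m (VsetElem h d jv g e)) ↔
      g ≤ copiesLeft h m (leavesLeft h p) jv + 1 := by
  have hpos : 0 < NN h ^ (jv - e) := pow_pos (NN_pos h) _
  have hcopies := copiesLeft_mul_pow (h := h) hejv hjv (leavesLeft h p)
  rcases he.eq_or_lt with rfl | he'
  · rw [canon_vsetElem_one] at hS ⊢
    have hne : g - 1 ≠ copiesLeft h m (leavesLeft h p) jv := by
      intro heq
      rw [heq, hcopies] at hS
      exact hS (path_mem_SDeltaR (by omega))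
    rw [IsLeft, ← hcopies, Nat.mul_lt_mul_right d.succ_pos, Nat.mul_lt_mul_right hpos]
    omega
  · rw [canon_vsetElem_of_two_le hh hg he', isLeft_tree_of_lt (by omega), ← hcopies,
      Nat.mul_le_mul_right_iff hpos]
    omega

lemma isLeft_canon_leaf_iff (hh : 0 < h) (hc : 0 < leavesLeft h p) {j i k t : ℕ}
    (hkt : IsJoined h k t) (hi : j = m → i = 1)
    (hv : Valid h d m (canon h m (.tree j i (leafPos h k))))
    (hS : canon h m (.tree j i (leafPos h k)) ∉ SDeltaR h d m p) :
    IsLeft h d m (leavesLeft h p) (canon h m (.tree j i (leafPos h k))) ↔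
      (i - 1) * NN h + t ≤ copiesLeft h m (leavesLeft h p) (j - 1) + 1 := by
  have ht := hkt.two_le
  obtain ⟨hj, hjm, hi₁⟩ := bounds_of_valid_canon_tree (leafPos_ne_nil hh k) hv
  rcases hjm.eq_or_lt with rfl | hjm
  · obtain rfl := hi rfl
    rw [canon_tree_top] at hS ⊢
    have hne : k ≠ leavesLeft h p + 1 := by
      rintro rfl
      exact hS leaf_mem_SDeltaR
    rw [isLeft_tree_top, leavesLeft_leafPos hkt.leaf_le, copiesLeft_pred]
    have := hkt.eq_or_eq
    omega
  · have hcopies := copiesLeft_mul_pow (h := h) (j.sub_le 1) hjm (leavesLeft h p)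
    rw [Nat.sub_sub_self (by omega), pow_one] at hcopies
    rw [isLeft_canon_tree_iff hh hc (leafPos_ne_nil hh k) hj hjm hS, ← hcopies]
    have htN : t ≤ NN h + 1 := hkt.le_two_pow.trans_eq (NN_add_one h).symm
    obtain ⟨i, rfl⟩ := Nat.exists_eq_add_of_le' hi₁
    rw [Nat.add_sub_cancel]
    constructor
    · intro hle
      have := Nat.mul_le_mul_right (NN h) hle
      rw [Nat.succ_mul] at this
      omega
    · intro hle
      exact Nat.lt_of_mul_lt_mul_right (a := NN h) (by omega)

/-! ### The side is constant along edges avoiding the separator -/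

lemma isLeft_child_iff (hh : 0 < h) (hc : 0 < leavesLeft h p) {j i : ℕ} {q : List Bool} {b : Bool}
    (hq : q.length < h) (hv : Valid h d m (canon h m (.tree j i q)))
    (hS : canon h m (.tree j i q) ∉ SDeltaR h d m p)
    (hS' : canon h m (.tree j i (q ++ [b])) ∉ SDeltaR h d m p)
    (hB : canon h m (.tree j i q) ∉ topLevels m p.length) :
    IsLeft h d m (leavesLeft h p) (canon h m (.tree j i q)) ↔
      IsLeft h d m (leavesLeft h p) (canon h m (.tree j i (q ++ [b]))) := by
  have hne : q ≠ [] := by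
    rintro rfl
    exact hB ⟨[], Nat.zero_le _, by simp [canon]⟩
  have hne' : q ++ [b] ≠ [] := List.append_ne_nil_of_right_ne_nil _ (List.cons_ne_nil _ _)
  obtain ⟨hj, hjm, hi⟩ := bounds_of_valid_canon_tree hne hv
  rcases hjm.eq_or_lt with rfl | hjm
  · obtain rfl : i = 1 := by
      rw [canon_tree_of_length_lt hne hq] at hv
      simp only [Valid, Nat.sub_self, pow_zero] at hv
      omega
    rw [canon_tree_top] at hB
    rw [canon_tree_top, canon_tree_top, isLeft_tree_top, isLeft_tree_top]
    have hlevel : p.length ≤ q.length := by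
      by_contra! hlt
      exact hB ⟨q, hlt.le, rfl⟩
    exact (leavesLeft_concat_lt_iff hq (two_pow_dvd_leavesLeft h hlevel) b).symm
  · rw [isLeft_canon_tree_iff hh hc hne hj hjm hS, isLeft_canon_tree_iff hh hc hne' hj hjm hS']

lemma isLeft_short_iff (hh : 0 < h) (hc : 0 < leavesLeft h p) {j i k t e : ℕ}
    (hkt : IsJoined h k t) (he : 1 ≤ e) (hej : e ≤ j - 1)
    (hv : Valid h d m (canon h m (.tree j i (leafPos h k))))
    (hv' : Valid h d m (canon h m (VsetElem h d (j - 1) ((i - 1) * NN h + t) e)))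
    (hS : canon h m (.tree j i (leafPos h k)) ∉ SDeltaR h d m p)
    (hS' : canon h m (VsetElem h d (j - 1) ((i - 1) * NN h + t) e) ∉ SDeltaR h d m p) :
    IsLeft h d m (leavesLeft h p) (canon h m (.tree j i (leafPos h k))) ↔
      IsLeft h d m (leavesLeft h p)
        (canon h m (VsetElem h d (j - 1) ((i - 1) * NN h + t) e)) := by
  have ht := hkt.two_le
  obtain ⟨hj, hjm, hi₁⟩ := bounds_of_valid_canon_tree (leafPos_ne_nil hh k) hv
  have hi : j = m → i = 1 := by
    rintro rfl
    have hle := le_of_valid_canon_vsetElem hh (by omega) he hej (by omega) hv'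
    rw [Nat.sub_sub_self (by omega), pow_one] at hle
    have : i - 1 < 1 := Nat.lt_of_mul_lt_mul_right (a := NN h) (by omega)
    omega
  rw [isLeft_canon_leaf_iff hh hc hkt hi hv hS,
    isLeft_canon_vsetElem_iff hh (by omega) he hej (by omega) hS']

lemma isLeft_iff_of_rel (hm : 2 ≤ m) (hh : 0 < h) (hc : 0 < leavesLeft h p) {x y : Raw}
    (hxy : rel h d m x y) (hx : Valid h d m x) (hy : Valid h d m y) (hxS : x ∉ SDeltaR h d m p)
    (hyS : y ∉ SDeltaR h d m p) (hxB : x ∉ topLevels m p.length) :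
    IsLeft h d m (leavesLeft h p) x ↔ IsLeft h d m (leavesLeft h p) y := by
  obtain ⟨a, b, hab, rfl, rfl⟩ := hxy
  cases hab with
  | base k =>
    have hne : k + 1 ≠ copiesLeft h m (leavesLeft h p) 1 * (d + 1) := fun heq =>
      hyS (heq ▸ path_mem_SDeltaR hm)
    simp only [canon, IsLeft]
    omega
  | child j i q b hq => exact isLeft_child_iff hh hc hq hx hxS hyS hxB
  | step j i k t e s => rfl
  | toLeaf j i k t e =>
    obtain ⟨-, -, hi, him, hk, hk', ht, ht₁, ht₂, -⟩ := hy
    have hi₁ : j = m → i = 1 := by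
      rintro rfl
      rw [Nat.sub_self, pow_zero] at him
      omega
    exact isLeft_canon_leaf_iff hh hc ⟨hk', ht, hk, ht₁, ht₂⟩ hi₁ hx hxS
  | toV j i k t e =>
    obtain ⟨hj, hjm, -, -, hk, hk', ht, ht₁, ht₂, he, hej, -⟩ := hx
    have ht' : 2 ≤ t := IsJoined.two_le ⟨hk', ht, hk, ht₁, ht₂⟩
    exact (isLeft_canon_vsetElem_iff hh (by omega) he hej (by omega) hyS).symm
  | short j i k t e _ hk hk' ht ht₁ ht₂ he hej =>
    exact isLeft_short_iff hh hc ⟨hk', ht, hk, ht₁, ht₂⟩ he hej hx hy hxS hyS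

lemma isLeft_iff_of_adj (hm : 2 ≤ m) (hh : 0 < h) (hc : 0 < leavesLeft h p) {u v : Verts h d m}
    (huv : (G h d m).Adj u v) (hu : u.1 ∉ SDeltaR h d m p ∪ topLevels m p.length)
    (hv : v.1 ∉ SDeltaR h d m p ∪ topLevels m p.length) :
    IsLeft h d m (leavesLeft h p) u.1 ↔ IsLeft h d m (leavesLeft h p) v.1 := by
  rw [Set.mem_union, not_or] at hu hv
  simp only [G, comap_adj, fromRel_adj, Function.Embedding.subtype_apply] at huv
  rcases huv.2 with hrel | hrel
  · exact isLeft_iff_of_rel hm hh hc hrel u.2 v.2 hu.1 hv.1 hu.2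
  · exact (isLeft_iff_of_rel hm hh hc hrel v.2 u.2 hv.1 hu.1 hv.2).symm

lemma isLeft_of_mem_SsetR (hh : 0 < h) {c : ℕ} (hc : 0 < c) {x : Raw} (hx : x ∈ SsetR h d m) :
    IsLeft h d m c x := by
  rcases hx with ⟨e, he, hem, rfl⟩ | rfl
  · rcases he.eq_or_lt with rfl | he'
    · rw [canon_vsetElem_one, IsLeft, Nat.sub_self, zero_mul, zero_mul]
      exact Nat.mul_pos (copiesLeft_pos hc 1) d.succ_pos
    · rw [canon_vsetElem_first hh he', isLeft_tree_of_lt (by omega)]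
      exact copiesLeft_pos hc e
  · rwa [canon_tree_top, isLeft_tree_top, leavesLeft_leafPos Nat.one_le_two_pow]

lemma not_isLeft_of_mem_TsetR (hp : p.length ≤ h) (hc : 0 < leavesLeft h p) {x : Raw}
    (hx : x ∈ TsetR h d m) (hxS : x ∉ SDeltaR h d m p) : ¬ IsLeft h d m (leavesLeft h p) x := by
  have hh := height_pos_of_leavesLeft_pos hp hc
  have hlt := leavesLeft_lt_two_pow hp
  rcases hx with ⟨e, he, hem, rfl⟩ | rfl
  · rw [isLeft_canon_vsetElem_iff hh (by omega) he hem (by omega) hxS, copiesLeft_pred]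
    omega
  · rw [canon_tree_top, isLeft_tree_top, leavesLeft_leafPos le_rfl]
    omega

lemma SDeltaR_eq_SsetR (hc : leavesLeft h p = 0) : SDeltaR h d m p = SsetR h d m := by
  rw [SDeltaR, SsetR, kOf_eq_leavesLeft_add_one, hc]

end Ghdm

/-- for every vertex `x` (at position `p`) on the `L`-th level of the binary
tree `B(G_{h,d,m})`, the set `S(Δ(x)) ∪ B_G(R(G), L)` separates `S(G)` from `T(G)`. -/
theorem statement5 (h d m : ℕ) (hm : 2 ≤ m) (L : ℕ) (hL : L ≤ h)
    (p : List Bool) (hp : p.length = L) :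
    CGT.Separates (Ghdm.G h d m)
      (Ghdm.lift (Ghdm.SDeltaR h d m p) ∪
        CGT.gBall (Ghdm.G h d m) (Ghdm.lift {Ghdm.RootR m}) L)
      (Ghdm.lift (Ghdm.SsetR h d m)) (Ghdm.lift (Ghdm.TsetR h d m)) := by
  subst hp
  rcases (Ghdm.leavesLeft h p).eq_zero_or_pos with hc | hc
  · rw [Ghdm.SDeltaR_eq_SsetR hc]
    exact CGT.separates_of_subset Set.subset_union_left
  · have hh := Ghdm.height_pos_of_leavesLeft_pos hL hc
    have hX := Set.union_subset_union_right (Ghdm.lift (Ghdm.SDeltaR h d m p))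
      (Ghdm.lift_topLevels_subset_gBall h d m p.length)
    exact CGT.separates_of_invariant (fun v => Ghdm.IsLeft h d m (Ghdm.leavesLeft h p) v.1)
      (fun u v huv hu hv => Ghdm.isLeft_iff_of_adj hm hh hc huv (mt (@hX u) hu) (mt (@hX v) hv))
      (fun y hy _ => Ghdm.isLeft_of_mem_SsetR hh hc hy)
      (fun z hz hzX => Ghdm.not_isLeft_of_mem_TsetR hL hc hz fun hzS => hzX (.inl hzS))
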